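/- Let Ω be a finite probability space, let S : Ω → 𝒮, W : Ω → 𝒲, and X : Ω → 𝒳 be random variables with 𝒮, 𝒲, 𝒳 finite and nonempty, and let f : 𝒲 × 𝒳 → 𝒬 be a function into a finite set 𝒬. If the pair (S, W) is independent of X, then H̃∞(S | f(W, X)) ≥ H̃∞(S | W). -/

import Mathlib

open Finset Real

/-- Probability of an event `E` under the weight function `p` on a finite sample space. -/
noncomputable def pr {Ω : Type*} [Fintype Ω] (p : Ω → ℝ) (E : Set Ω) : ℝ :=
  ∑ ω, E.indicator p ω

/-- `P[X = x]`. -/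
noncomputable def prEq {Ω 𝒳 : Type*} [Fintype Ω] (p : Ω → ℝ) (X : Ω → 𝒳) (x : 𝒳) : ℝ :=
  pr p {ω | X ω = x}

/-- `P[X = x | Y = y]`, taken to be `0` when `P[Y = y] = 0`. -/
noncomputable def condProb {Ω 𝒳 𝒴 : Type*} [Fintype Ω]
    (p : Ω → ℝ) (X : Ω → 𝒳) (x : 𝒳) (Y : Ω → 𝒴) (y : 𝒴) : ℝ :=
  if prEq p Y y = 0 then 0 else pr p {ω | X ω = x ∧ Y ω = y} / prEq p Y y

/-- Average min-entropy `H̃∞(X | Y)`. -/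
noncomputable def avgMinEntropy {Ω 𝒳 𝒴 : Type*} [Fintype Ω]
    [Fintype 𝒳] [Nonempty 𝒳] [Fintype 𝒴]
    (p : Ω → ℝ) (X : Ω → 𝒳) (Y : Ω → 𝒴) : ℝ :=
  - Real.logb 2 (∑ y : 𝒴, prEq p Y y *
      (Finset.univ.sup' Finset.univ_nonempty fun x : 𝒳 => condProb p X x Y y))

/-- Min-entropy `H∞(X)`. -/
noncomputable def minEntropy {Ω 𝒳 : Type*} [Fintype Ω] [Fintype 𝒳] [Nonempty 𝒳]
    (p : Ω → ℝ) (X : Ω → 𝒳) : ℝ :=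
  - Real.logb 2 (Finset.univ.sup' Finset.univ_nonempty fun x : 𝒳 => prEq p X x)

open Classical in
lemma pr_eq_ite {Ω : Type*} [Fintype Ω] (p : Ω → ℝ) (E : Set Ω) :
    pr p E = ∑ ω, if ω ∈ E then p ω else 0 := by
  unfold pr
  refine Finset.sum_congr rfl fun ω _ => ?_
  rw [Set.indicator_apply]

lemma pr_nonneg {Ω : Type*} [Fintype Ω] (p : Ω → ℝ) (hp : ∀ ω, 0 ≤ p ω) (E : Set Ω) :
    0 ≤ pr p E :=
  Finset.sum_nonneg fun ω _ => Set.indicator_nonneg (fun ω _ => hp ω) ω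

lemma pr_mono {Ω : Type*} [Fintype Ω] (p : Ω → ℝ) (hp : ∀ ω, 0 ≤ p ω) {E F : Set Ω}
    (h : E ⊆ F) : pr p E ≤ pr p F :=
  Finset.sum_le_sum fun ω _ => Set.indicator_le_indicator_of_subset h (fun ω => hp ω) ω

lemma prEq_mul_cond {Ω 𝒳 𝒴 : Type*} [Fintype Ω] (p : Ω → ℝ) (hp : ∀ ω, 0 ≤ p ω)
    (X : Ω → 𝒳) (x : 𝒳) (Y : Ω → 𝒴) (y : 𝒴) :
    prEq p Y y * condProb p X x Y y = pr p {ω | X ω = x ∧ Y ω = y} := by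
  unfold condProb
  split_ifs with h
  · have h1 : pr p {ω | X ω = x ∧ Y ω = y} ≤ prEq p Y y := pr_mono p hp fun ω hω => hω.2
    have h2 := pr_nonneg p hp {ω | X ω = x ∧ Y ω = y}
    linarith
  · field_simp

lemma sum_prEq {Ω 𝒳 : Type*} [Fintype Ω] [Fintype 𝒳] (p : Ω → ℝ) (X : Ω → 𝒳) :
    ∑ x, prEq p X x = ∑ ω, p ω := by
  classical
  simp only [prEq, pr_eq_ite, Set.mem_setOf_eq]
  rw [Finset.sum_comm]
  simp

/-- the mass guessed by the strategy `g` -/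
lemma sum_guess {Ω 𝒳 𝒴 : Type*} [Fintype Ω] [Fintype 𝒴] (p : Ω → ℝ) (X : Ω → 𝒳)
    (Y : Ω → 𝒴) (g : 𝒴 → 𝒳) :
    ∑ y, pr p {ω | X ω = g y ∧ Y ω = y} = pr p {ω | X ω = g (Y ω)} := by
  classical
  simp only [pr_eq_ite, Set.mem_setOf_eq]
  rw [Finset.sum_comm]
  refine Finset.sum_congr rfl fun ω _ => ?_
  rw [Finset.sum_eq_single (Y ω)]
  · simp
  · intro y _ hy
    rw [if_neg]
    exact fun h => hy h.2.symm
  · simp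

theorem stmt_9 {Ω 𝒮 𝒲 𝒳 𝒬 : Type*} [Fintype Ω]
    [Fintype 𝒮] [Nonempty 𝒮] [Fintype 𝒲] [Nonempty 𝒲]
    [Fintype 𝒳] [Nonempty 𝒳] [Fintype 𝒬]
    (p : Ω → ℝ) (hp : ∀ ω, 0 ≤ p ω) (hsum : ∑ ω, p ω = 1)
    (S : Ω → 𝒮) (W : Ω → 𝒲) (X : Ω → 𝒳) (f : 𝒲 × 𝒳 → 𝒬)
    (hindep : ∀ (s : 𝒮) (w : 𝒲) (x : 𝒳),
      prEq p (fun ω => (S ω, W ω, X ω)) (s, w, x) =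
        prEq p (fun ω => (S ω, W ω)) (s, w) * prEq p X x) :
    avgMinEntropy p S (fun ω => f (W ω, X ω)) ≥ avgMinEntropy p S W := by
  unfold avgMinEntropy
  set Q : Ω → 𝒬 := fun ω => f (W ω, X ω) with hQ
  have hg : ∀ q : 𝒬, ∃ s : 𝒮, (Finset.univ.sup' Finset.univ_nonempty
      fun x : 𝒮 => condProb p S x Q q) = condProb p S s Q q := fun q => by
    obtain ⟨s, -, hs⟩ := Finset.exists_mem_eq_sup' (Finset.univ_nonempty (α := 𝒮))
      (fun x : 𝒮 => condProb p S x Q q)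
    exact ⟨s, hs⟩
  choose g hg using hg
  have hpos : 0 < ∑ q, prEq p Q q * (Finset.univ.sup' Finset.univ_nonempty
      fun x : 𝒮 => condProb p S x Q q) := by
    have h1 : (1 : ℝ) ≤ Fintype.card 𝒮 * ∑ q, prEq p Q q * (Finset.univ.sup'
        Finset.univ_nonempty fun x : 𝒮 => condProb p S x Q q) := by
      calc (1 : ℝ) = ∑ s : 𝒮, prEq p S s := by rw [sum_prEq, hsum]
        _ = ∑ s : 𝒮, ∑ q, pr p {ω | S ω = s ∧ Q ω = q} := by
          refine Finset.sum_congr rfl fun s _ => ?_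
          rw [sum_guess p S Q (fun _ => s)]
          rfl
        _ ≤ ∑ s : 𝒮, ∑ q, prEq p Q q * (Finset.univ.sup'
              Finset.univ_nonempty fun x : 𝒮 => condProb p S x Q q) := by
          refine Finset.sum_le_sum fun s _ => Finset.sum_le_sum fun q _ => ?_
          rw [← prEq_mul_cond p hp]
          exact mul_le_mul_of_nonneg_left
            (Finset.le_sup' (fun x : 𝒮 => condProb p S x Q q) (Finset.mem_univ s))
            (pr_nonneg p hp _)
        _ = _ := by simp
    by_contra hn
    push Not at hn
    have := mul_nonpos_of_nonneg_of_nonpos (Nat.cast_nonneg (α := ℝ) (Fintype.card 𝒮)) hn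
    linarith
  refine neg_le_neg (Real.logb_le_logb_of_le (by norm_num) hpos ?_)
  calc _ = ∑ q, pr p {ω | S ω = g q ∧ Q ω = q} := by
        refine Finset.sum_congr rfl fun q _ => ?_
        rw [hg, prEq_mul_cond p hp]
    _ = pr p {ω | S ω = g (Q ω)} := sum_guess p S Q g
    _ = ∑ y : 𝒲 × 𝒳, pr p {ω | S ω = g (f y) ∧ (W ω, X ω) = y} :=
        (sum_guess p S (fun ω => (W ω, X ω)) (fun y => g (f y))).symm
    _ = ∑ w, ∑ x, pr p {ω | S ω = g (f (w, x)) ∧ W ω = w} * prEq p X x := by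
        rw [Fintype.sum_prod_type]
        refine Finset.sum_congr rfl fun w _ => Finset.sum_congr rfl fun x _ => ?_
        have := hindep (g (f (w, x))) w x
        simpa only [prEq, Prod.mk.injEq] using this
    _ ≤ ∑ w, ∑ x, (prEq p W w * (Finset.univ.sup' Finset.univ_nonempty
          fun s : 𝒮 => condProb p S s W w)) * prEq p X x := by
        refine Finset.sum_le_sum fun w _ => Finset.sum_le_sum fun x _ => ?_
        refine mul_le_mul_of_nonneg_right ?_ (pr_nonneg p hp _)
        rw [← prEq_mul_cond p hp]
        exact mul_le_mul_of_nonneg_left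
          (Finset.le_sup' (fun s : 𝒮 => condProb p S s W w) (Finset.mem_univ _))
          (pr_nonneg p hp _)
    _ = _ := by
        refine Finset.sum_congr rfl fun w _ => ?_
        rw [← Finset.mul_sum, sum_prEq, hsum, mul_one]
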